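/- Let Y_+ additionally be pointed, let y_0 ∈ V(0) be a minimal point of (P(0)) with y_0 ∈ F(x_0) for some feasible x_0, and let L_{y_0} be the Lagrange process of (P(0)) at y_0. Assume: the Slater condition; the set Y_+ ∩ S_Y is compact (S_Y the unit sphere of Y); and V is Y_+-dominated by M near 0, i.e. there is a neighbourhood V_0 of 0 in Z with V(z) ⊆ M(z)+Y_+ for every z ∈ V_0, where M(z) := Min(V(z)). If at least one of the following holds: (a) Graph(L_{y_0}) has a bounded base, (b) Y_+ ∖ {0} is open, (c) y_0 is a Henig global properly efficient point of V(0), or (d) y_0 is a Henig properly efficient point of V(0), then Min(DM(0,y_0)(z)) = Min(L_{y_0}(−z)) for every z ∈ Z, where DM(0,y_0) is the contingent derivative of the marginal map M at (0,y_0). -/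

import Mathlib

open Pointwise Filter Topology

namespace Paper

section Defs

variable {E : Type*} [NormedAddCommGroup E] [NormedSpace ℝ E]

/-- The cone hull of a set: all nonnegative multiples of its elements. -/
def coneHull (A : Set E) : Set E := {x | ∃ r : ℝ, 0 ≤ r ∧ ∃ a ∈ A, x = r • a}

/-- A cone: a nonempty set closed under multiplication by nonnegative scalars. -/
def IsCone (K : Set E) : Prop := K.Nonempty ∧ ∀ r : ℝ, 0 ≤ r → ∀ x ∈ K, r • x ∈ K

/-- A pointed cone: `K ∩ (-K) = {0}`. -/
def IsPointed (K : Set E) : Prop := K ∩ (-K) = {0}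

/-- A proper cone: `{0} ≠ K ≠ E`. -/
def IsProper (K : Set E) : Prop := K ≠ {0} ∧ K ≠ Set.univ

/-- A solid cone: nonempty interior. -/
def IsSolid (K : Set E) : Prop := (interior K).Nonempty

/-- The contingent cone to `A` at `w`. -/
def contingentCone (A : Set E) (w : E) : Set E :=
  {v | Filter.liminf (fun h : ℝ => Metric.infDist (w + h • v) A / h) (𝓝[>] (0:ℝ)) = 0}

end Defs

section SV

variable {X Y Z : Type*}
  [NormedAddCommGroup X] [NormedSpace ℝ X]
  [NormedAddCommGroup Y] [NormedSpace ℝ Y]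
  [NormedAddCommGroup Z] [NormedSpace ℝ Z]

/-- The graph of a set-valued map. -/
def graph (Δ : Z → Set Y) : Set (Z × Y) := {p | p.2 ∈ Δ p.1}

/-- The image of a set by a set-valued map. -/
def imageSet (Δ : Z → Set Y) (A : Set Z) : Set Y := ⋃ w ∈ A, Δ w

/-- The feasible set map `S(z) = {x ∈ Ω : G(x) ∩ (z - Z₊) ≠ ∅}`. -/
def Smap (Ω : Set X) (G : X → Set Z) (Zp : Set Z) (z : Z) : Set X :=
  {x | x ∈ Ω ∧ (G x ∩ ({z} - Zp)).Nonempty}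

/-- The value map `V(z) = F(S(z))`. -/
def Vmap (Ω : Set X) (F : X → Set Y) (G : X → Set Z) (Zp : Set Z) (z : Z) : Set Y :=
  ⋃ x ∈ Smap Ω G Zp z, F x

/-- The map `(V + Y₊)(z) = V(z) + Y₊`. -/
def VplusMap (Ω : Set X) (F : X → Set Y) (G : X → Set Z) (Zp : Set Z) (Yp : Set Y)
    (z : Z) : Set Y :=
  Vmap Ω F G Zp z + Yp

/-- The graph of `V + Y₊`. -/
def GraphVplus (Ω : Set X) (F : X → Set Y) (G : X → Set Z) (Zp : Set Z) (Yp : Set Y) :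
    Set (Z × Y) :=
  {p : Z × Y | p.2 ∈ Vmap Ω F G Zp p.1 + Yp}

/-- Minimal points of a set `A` with respect to the cone `Yp`. -/
def MinSet (Yp : Set Y) (A : Set Y) : Set Y :=
  {a ∈ A | A ∩ ({a} - Yp) ⊆ {a} + Yp}

/-- The marginal map `M(z) = Min(V(z))`. -/
def Mmap (Ω : Set X) (F : X → Set Y) (G : X → Set Z) (Zp : Set Z) (Yp : Set Y)
    (z : Z) : Set Y :=
  MinSet Yp (Vmap Ω F G Zp z)

/-- `y₀` is a nondominated point of `(P(0))`. -/
def Nondominated (Ω : Set X) (F : X → Set Y) (G : X → Set Z) (Zp : Set Z) (Yp : Set Y)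
    (y0 : Y) : Prop :=
  y0 ∈ closure (Vmap Ω F G Zp 0) ∧
    Vmap Ω F G Zp 0 ∩ ({y0} - Yp) ⊆ {y0} + Yp

/-- `y₀` is a minimal point of `(P(0))`. -/
def MinimalPoint (Ω : Set X) (F : X → Set Y) (G : X → Set Z) (Zp : Set Z) (Yp : Set Y)
    (y0 : Y) : Prop :=
  y0 ∈ Vmap Ω F G Zp 0 ∧
    Vmap Ω F G Zp 0 ∩ ({y0} - Yp) ⊆ {y0} + Yp

/-- The set `S_{Y₊}(y₀)` of separating pairs of continuous linear functionals. -/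
def Sdual (Ω : Set X) (F : X → Set Y) (G : X → Set Z) (Zp : Set Z) (Yp : Set Y) (y0 : Y) :
    Set ((Z →L[ℝ] ℝ) × (Y →L[ℝ] ℝ)) :=
  {p | (∀ z' ∈ -Zp, ∀ y' ∈ ({y0} : Set Y) - Yp, p.1 z' + p.2 y' ≤ p.2 y0) ∧
       (∀ q ∈ GraphVplus Ω F G Zp Yp, p.2 y0 ≤ p.1 q.1 + p.2 q.2)}

/-- `P(Z,Y)`: closed convex processes with full domain. -/
def PZY : Set (Z → Set Y) :=
  {Δ | IsClosed (graph Δ) ∧ Convex ℝ (graph Δ) ∧ IsCone (graph Δ) ∧ ∀ z, (Δ z).Nonempty}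

/-- The set `Λ_{(z*,y*)}` of processes associated to `(z*,y*)`. -/
def Lambda (zs : Z →L[ℝ] ℝ) (ys : Y →L[ℝ] ℝ) : Set (Z → Set Y) :=
  {Δ | Δ ∈ PZY ∧ graph Δ \ {0} ⊆ {p : Z × Y | 0 < -(zs p.1) + ys p.2}}

/-- The set `Γ_{y₀}` of processes associated to `y₀`. -/
def Gamma (Ω : Set X) (F : X → Set Y) (G : X → Set Z) (Zp : Set Z) (Yp : Set Y) (y0 : Y) :
    Set (Z → Set Y) :=
  ⋃ p ∈ Sdual Ω F G Zp Yp y0 \ {0}, Lambda p.1 p.2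

/-- The Slater constraint qualification. -/
def Slater (Ω : Set X) (F : X → Set Y) (G : X → Set Z) (Zp : Set Z) : Prop :=
  ∃ x1 ∈ Ω, (F x1).Nonempty ∧ (G x1 ∩ (-interior Zp)).Nonempty

/-- `Ψ(Δ) = ∪_{x∈Ω}(F(x) + Δ(G(x)+Z₊))`. -/
def Umap (Ω : Set X) (F : X → Set Y) (G : X → Set Z) (Zp : Set Z) (Δ : Z → Set Y) : Set Y :=
  ⋃ x ∈ Ω, (F x + imageSet Δ (G x + Zp))

/-- The dual map `Φ(Δ)`: nondominated points of the closure of `Ψ(Δ)`. -/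
def Phi (Ω : Set X) (F : X → Set Y) (G : X → Set Z) (Zp : Set Z) (Yp : Set Y)
    (Δ : Z → Set Y) : Set Y :=
  {y ∈ closure (Umap Ω F G Zp Δ) | Umap Ω F G Zp Δ ∩ ({y} - Yp) ⊆ {y} + Yp}

/-- `Δ` is a Lagrange multiplier of `(P(0))` at `y₀`. -/
def LagrangeMultiplier (Ω : Set X) (F : X → Set Y) (G : X → Set Z) (Zp : Set Z) (Yp : Set Y)
    (Δ : Z → Set Y) (y0 : Y) : Prop :=
  y0 ∈ closure (Umap Ω F G Zp Δ) ∧ Umap Ω F G Zp Δ ∩ ({y0} - Yp) ⊆ {y0} + Yp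

/-- The graph of the Lagrange process of `(P(0))` at `y₀`. -/
def GraphLagrange (Ω : Set X) (F : X → Set Y) (G : X → Set Z) (Zp : Set Z) (Yp : Set Y)
    (y0 : Y) : Set (Z × Y) :=
  {p : Z × Y | ∀ q ∈ Sdual Ω F G Zp Yp y0, q.1 p.1 ≤ q.2 p.2}

/-- The Lagrange process of `(P(0))` at `y₀`, as a set-valued map. -/
def Lagrange (Ω : Set X) (F : X → Set Y) (G : X → Set Z) (Zp : Set Z) (Yp : Set Y) (y0 : Y)
    (z : Z) : Set Y :=
  {y | (z, y) ∈ GraphLagrange Ω F G Zp Yp y0}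

/-- The contingent derivative of a set-valued map `H` at `(z₀, y₀)`. -/
def contingentDeriv (H : Z → Set Y) (z0 : Z) (y0 : Y) (z : Z) : Set Y :=
  {y | (z, y) ∈ contingentCone (graph H) (z0, y0)}

/-- The S-derivative (Shi derivative) of a set-valued map `H` at `(z₀, y₀)`. -/
def Sderiv (H : Z → Set Y) (z0 : Z) (y0 : Y) (z : Z) : Set Y :=
  {y | ∃ (h : ℕ → ℝ) (zn : ℕ → Z) (yn : ℕ → Y),
    (∀ n, 0 < h n) ∧ Filter.Tendsto zn Filter.atTop (𝓝 z) ∧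
    Filter.Tendsto yn Filter.atTop (𝓝 y) ∧
    Filter.Tendsto (fun n => h n • zn n) Filter.atTop (𝓝 (0:Z)) ∧
    ∀ n, y0 + h n • yn n ∈ H (z0 + h n • zn n)}

/-- The standing assumptions of the paper: `Y₊`, `Z₊` proper solid convex cones, `Ω` nonempty
convex, `F` is `Y₊`-convex and `G` is `Z₊`-convex. -/
def StandingHyp (Ω : Set X) (F : X → Set Y) (G : X → Set Z) (Zp : Set Z) (Yp : Set Y) : Prop :=
  IsCone Yp ∧ IsProper Yp ∧ IsSolid Yp ∧ Convex ℝ Yp ∧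
  IsCone Zp ∧ IsProper Zp ∧ IsSolid Zp ∧ Convex ℝ Zp ∧
  Ω.Nonempty ∧ Convex ℝ Ω ∧
  Convex ℝ {p : X × Y | p.1 ∈ Ω ∧ p.2 ∈ F p.1 + Yp} ∧
  Convex ℝ {p : X × Z | p.1 ∈ Ω ∧ p.2 ∈ G p.1 + Zp}

end SV

variable {X Y Z : Type*}
  [NormedAddCommGroup X] [NormedSpace ℝ X]
  [NormedAddCommGroup Y] [NormedSpace ℝ Y]
  [NormedAddCommGroup Z] [NormedSpace ℝ Z]

/-!
Since the graph of `V + Y₊` is convex, its contingent cone at `(0, y₀)` is the closed cone generated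
by its translate, which by the bipolar theorem is the graph of `z ↦ L(-z)`. It thus suffices to
compare the contingent derivatives of `M` and `V + Y₊`: two sets `D ⊆ T ⊆ D + Y₊` have the same
minimal points. Near `0` every point of the graph of `V + Y₊` is a point of the graph of `M` plus
some `(0, η)` with `η ∈ Y₊`. If `L(0) ∩ -Y₊ = {0}`, compactness of `Y₊ ∩ S_Y` bounds the quotients
`η / h` along a contingent direction, and a cluster point of them gives
`D(V + Y₊)(0, y₀) ⊆ DM(0, y₀) + Y₊`.

In case (a), `L(0) ∩ -Y₊ = {0}` holds because a cone with a base is pointed. In the other cases a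
dilating cone separates `V(0) - y₀` from `-Y₊`, hence also the closed cone generated by
`V(0) + Y₊ - y₀`, and the Slater condition identifies that cone with `L(0)`.
-/

section Cones

variable {E : Type*} [NormedAddCommGroup E] {A K T : Set E} {x y : E}

theorem IsPointed.zero_mem (hK : IsPointed K) : (0 : E) ∈ K :=
  (hK.symm.subset (Set.mem_singleton 0)).1

theorem IsPointed.eq_zero (hK : IsPointed K) (hx : x ∈ K) (hnx : -x ∈ K) : x = 0 :=
  hK.subset ⟨hx, hnx⟩

variable [NormedSpace ℝ E]

theorem IsCone.zero_mem (hK : IsCone K) : (0 : E) ∈ K := by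
  obtain ⟨x, hx⟩ := hK.1
  simpa using hK.2 0 le_rfl x hx

theorem IsCone.add_mem (hK : IsCone K) (hKc : Convex ℝ K) (hx : x ∈ K) (hy : y ∈ K) :
    x + y ∈ K := by
  obtain ⟨z, hz, hzxy⟩ := hKc.exists_mem_add_smul_eq hx hy zero_le_one zero_le_one
  rw [← one_smul ℝ x, ← one_smul ℝ y, ← hzxy]
  exact hK.2 (1 + 1) (by norm_num) z hz

theorem IsCone.smul_mem_interior (hK : IsCone K) {r : ℝ} (hr : 0 < r) (hx : x ∈ interior K) :
    r • x ∈ interior K := by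
  have hsub : r • K ⊆ K := Set.smul_set_subset_iff.2 fun u hu => hK.2 r hr.le u hu
  exact interior_mono hsub (interior_smul₀ hr.ne' K ▸ Set.smul_mem_smul_set hx)

theorem IsCone.add (hT : IsCone T) (hK : IsCone K) : IsCone (T + K) := by
  refine ⟨hT.1.add hK.1, ?_⟩
  rintro r hr _ ⟨t, ht, k, hk, rfl⟩
  exact ⟨r • t, hT.2 r hr t ht, r • k, hK.2 r hr k hk, (smul_add r t k).symm⟩

theorem isCone_closure (hK : IsCone K) : IsCone (closure K) :=
  ⟨hK.1.closure, fun r hr _ hx => map_mem_closure (continuous_const_smul r) hx (hK.2 r hr)⟩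

theorem subset_coneHull : A ⊆ coneHull A :=
  fun a ha => ⟨1, zero_le_one, a, ha, (one_smul ℝ a).symm⟩

theorem isCone_coneHull (hA : A.Nonempty) : IsCone (coneHull A) := by
  refine ⟨hA.mono subset_coneHull, ?_⟩
  rintro r hr _ ⟨s, hs, a, ha, rfl⟩
  exact ⟨r * s, mul_nonneg hr hs, a, ha, smul_smul r s a⟩

theorem coneHull_subset (hK : IsCone K) (hAK : A ⊆ K) : coneHull A ⊆ K := by
  rintro _ ⟨r, hr, a, ha, rfl⟩
  exact hK.2 r hr a (hAK ha)

theorem add_mem_coneHull (hA : Convex ℝ A) (hx : x ∈ coneHull A) (hy : y ∈ coneHull A) :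
    x + y ∈ coneHull A := by
  obtain ⟨r, hr, a, ha, rfl⟩ := hx
  obtain ⟨s, hs, b, hb, rfl⟩ := hy
  obtain ⟨c, hc, hcab⟩ := hA.exists_mem_add_smul_eq ha hb hr hs
  exact ⟨r + s, add_nonneg hr hs, c, hc, hcab.symm⟩

theorem convex_coneHull (hA : Convex ℝ A) : Convex ℝ (coneHull A) := by
  rintro _ ⟨r, hr, a, ha, rfl⟩ _ ⟨s, hs, b, hb, rfl⟩ t u ht hu -
  rw [smul_smul, smul_smul]
  exact add_mem_coneHull hA ⟨_, mul_nonneg ht hr, a, ha, rfl⟩ ⟨_, mul_nonneg hu hs, b, hb, rfl⟩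

theorem coneHull_inter_neg_subset (hA : Convex ℝ A) (h0 : (0 : E) ∉ A) :
    coneHull A ∩ -coneHull A ⊆ {0} := by
  rintro _ ⟨⟨r, hr, a, ha, rfl⟩, s, hs, b, hb, hrs⟩
  obtain ⟨c, hc, hcab⟩ := hA.exists_mem_add_smul_eq ha hb hr hs
  rw [← hrs, add_neg_cancel, smul_eq_zero] at hcab
  have hsum : r + s = 0 := hcab.resolve_right fun h => h0 (h ▸ hc)
  simp [((add_eq_zero_iff_of_nonneg hr hs).1 hsum).1]

theorem mem_closure_coneHull_iff (hA : Convex ℝ A) (hne : A.Nonempty) :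
    x ∈ closure (coneHull A) ↔ ∀ f : E →L[ℝ] ℝ, (∀ a ∈ A, 0 ≤ f a) → 0 ≤ f x := by
  constructor
  · intro hx f hf
    have hclosed : IsClosed {u | 0 ≤ f u} := isClosed_le continuous_const f.continuous
    have hcone : IsCone {u | 0 ≤ f u} :=
      ⟨⟨0, by simp⟩, fun r hr u hu => by simpa using mul_nonneg hr hu⟩
    exact closure_minimal (coneHull_subset hcone hf) hclosed hx
  · contrapose!
    intro hx
    obtain ⟨f, u, hfx, hfu⟩ := geometric_hahn_banach_point_closed
      (convex_coneHull hA).closure isClosed_closure hx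
    have hcone := isCone_closure (isCone_coneHull hne)
    have hu : u < 0 := by simpa using hfu 0 hcone.zero_mem
    refine ⟨f, fun a ha => ?_, hfx.trans hu⟩
    by_contra! hfa
    have hlt := hfu _ (hcone.2 (u / f a) (div_nonneg_of_nonpos hu.le hfa.le) a
      (subset_closure (subset_coneHull ha)))
    rw [map_smul, smul_eq_mul, div_mul_cancel₀ _ hfa.ne] at hlt
    exact lt_irrefl u hlt

theorem IsCone.isCompact_inter_closedBall (hK : IsCone K)
    (hcpt : IsCompact (K ∩ Metric.sphere 0 1)) (R : ℝ) :
    IsCompact (K ∩ Metric.closedBall 0 R) := by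
  rcases lt_or_ge R 0 with hR | hR
  · simp [Metric.closedBall_eq_empty.2 hR]
  suffices K ∩ Metric.closedBall 0 R =
      insert 0 ((fun q : ℝ × E => q.1 • q.2) '' (Set.Icc 0 R ×ˢ (K ∩ Metric.sphere 0 1))) from
    this ▸ ((isCompact_Icc.prod hcpt).image (by fun_prop)).insert 0
  refine Set.Subset.antisymm ?_ (Set.insert_subset ⟨hK.zero_mem, by simpa using hR⟩ ?_)
  · rintro y ⟨hy, hyR⟩
    rcases eq_or_ne y 0 with rfl | hy0
    · exact Set.mem_insert 0 _
    · refine Or.inr ⟨(‖y‖, ‖y‖⁻¹ • y), ⟨⟨norm_nonneg y, by simpa using hyR⟩,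
        hK.2 _ (by positivity) y hy, by simp [norm_smul, hy0]⟩, ?_⟩
      simp [smul_smul, hy0]
  · rintro _ ⟨⟨r, u⟩, ⟨⟨hr, hrR⟩, hu, hu1⟩, rfl⟩
    refine ⟨hK.2 r hr u hu, ?_⟩
    rw [mem_sphere_zero_iff_norm] at hu1
    simpa [norm_smul, hu1, abs_of_nonneg hr] using hrR

theorem IsCone.isClosed (hK : IsCone K) (hcpt : IsCompact (K ∩ Metric.sphere 0 1)) :
    IsClosed K := by
  refine isClosed_of_closure_subset fun y hy => ?_
  have hball : y ∈ Metric.ball (0 : E) (‖y‖ + 1) := by simp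
  have hsub : Metric.ball 0 (‖y‖ + 1) ∩ K ⊆ K ∩ Metric.closedBall 0 (‖y‖ + 1) :=
    fun u hu => ⟨hu.2, Metric.ball_subset_closedBall hu.1⟩
  have hyR := closure_mono hsub (Metric.isOpen_ball.inter_closure ⟨hball, hy⟩)
  rw [(hK.isCompact_inter_closedBall hcpt _).isClosed.closure_eq] at hyR
  exact hyR.1

theorem exists_pos_forall_mul_norm_le_norm_add (hT : IsCone T) (hTcl : IsClosed T)
    (hK : IsCone K) (hcpt : IsCompact (K ∩ Metric.sphere 0 1)) (hTK : T ∩ -K ⊆ {0}) :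
    ∃ δ > 0, ∀ t ∈ T, ∀ k ∈ K, δ * ‖k‖ ≤ ‖t + k‖ := by
  have hdisj : -(K ∩ Metric.sphere 0 1) ⊆ Tᶜ := by
    rintro k ⟨hk, hk1⟩ hkT
    obtain rfl : k = 0 := hTK ⟨hkT, hk⟩
    simp at hk1
  obtain ⟨δ, hδ, hsub⟩ := hcpt.neg.exists_thickening_subset_open hTcl.isOpen_compl hdisj
  refine ⟨δ, hδ, fun t ht k hk => ?_⟩
  rcases eq_or_ne k 0 with rfl | hk0
  · simp
  have hpos : 0 < ‖k‖ := norm_pos_iff.2 hk0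
  by_contra! hlt
  refine hsub (Metric.mem_thickening_iff.2 ⟨-(‖k‖⁻¹ • k), ⟨?_, ?_⟩, ?_⟩)
    (hT.2 ‖k‖⁻¹ (by positivity) t ht)
  · simpa using hK.2 ‖k‖⁻¹ (by positivity) k hk
  · simp [norm_smul, hk0]
  · rwa [dist_eq_norm, sub_neg_eq_add, ← smul_add, norm_smul, norm_inv, norm_norm,
      inv_mul_lt_iff₀ hpos, mul_comm]

theorem closure_add_inter_neg_subset (hT : IsCone T) (hTcl : IsClosed T)
    (hK : IsCone K) (hKc : Convex ℝ K) (hKp : IsPointed K)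
    (hcpt : IsCompact (K ∩ Metric.sphere 0 1)) (hTK : T ∩ -K ⊆ {0}) :
    closure (T + K) ∩ -K ⊆ {0} := by
  rintro x ⟨hx, hxK⟩
  obtain ⟨δ, hδ, hgap⟩ := exists_pos_forall_mul_norm_le_norm_add hT hTcl hK hcpt hTK
  suffices x ∈ closure K from
    hKp.eq_zero ((hK.isClosed hcpt).closure_eq ▸ this) hxK
  refine Metric.mem_closure_iff.2 fun ε hε => ?_
  obtain ⟨_, ⟨t, ht, k, hk, rfl⟩, hdist⟩ := Metric.mem_closure_iff.1 hx (δ * ε) (by positivity)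
  refine ⟨k, hk, lt_of_mul_lt_mul_left ?_ hδ.le⟩
  calc δ * dist x k = δ * ‖k + -x‖ := by rw [dist_comm, dist_eq_norm, sub_eq_add_neg]
    _ ≤ ‖t + (k + -x)‖ := hgap t ht _ (hK.add_mem hKc hk hxK)
    _ = dist x (t + k) := by rw [dist_comm, dist_eq_norm]; congr 1; abel
    _ < δ * ε := hdist

end Cones

section ContingentCone

variable {E : Type*} [NormedAddCommGroup E] [NormedSpace ℝ E] {A B C K : Set E} {v w : E}

theorem mem_contingentCone_iff_infDist (hw : w ∈ closure A) :
    v ∈ contingentCone A w ↔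
      ∀ ε > 0, ∃ᶠ h : ℝ in 𝓝[>] 0, Metric.infDist (w + h • v) A < ε * h := by
  have hpos : ∀ᶠ h : ℝ in 𝓝[>] 0, 0 < h := self_mem_nhdsWithin
  have hnonneg : ∀ᶠ h : ℝ in 𝓝[>] 0, 0 ≤ Metric.infDist (w + h • v) A / h :=
    hpos.mono fun h hh => div_nonneg Metric.infDist_nonneg hh.le
  have hle : ∀ᶠ h : ℝ in 𝓝[>] 0, Metric.infDist (w + h • v) A / h ≤ ‖v‖ := by
    filter_upwards [hpos] with h hh
    rw [div_le_iff₀ hh]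
    calc Metric.infDist (w + h • v) A ≤ Metric.infDist w A + dist (w + h • v) w :=
          Metric.infDist_le_infDist_add_dist
      _ = ‖v‖ * h := by
          rw [Metric.infDist_zero_of_mem_closure hw, zero_add, dist_eq_norm, add_sub_cancel_left,
            norm_smul, Real.norm_of_nonneg hh.le, mul_comm]
  have hbelow := isBoundedUnder_of_eventually_ge hnonneg
  have hcobdd := (isBoundedUnder_of_eventually_le hle).isCoboundedUnder_ge
  constructor
  · intro (hv : liminf _ _ = 0) ε hε
    refine ((frequently_lt_of_liminf_lt hcobdd (hv.trans_lt hε)).and_eventually hpos).mono ?_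
    exact fun h ⟨hlt, hh⟩ => (div_lt_iff₀ hh).1 hlt
  · intro H
    refine le_antisymm (le_of_forall_pos_le_add fun ε hε => ?_) (le_liminf_of_le hcobdd hnonneg)
    rw [zero_add]
    refine liminf_le_of_frequently_le (((H ε hε).and_eventually hpos).mono ?_) hbelow
    exact fun h ⟨hlt, hh⟩ => ((div_lt_iff₀ hh).2 hlt).le

theorem mem_contingentCone_iff_frequently (hw : w ∈ closure A) :
    v ∈ contingentCone A w ↔ ∃ᶠ p : E × ℝ in 𝓝 v ×ˢ 𝓝[>] 0, w + p.2 • p.1 ∈ A := by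
  rw [mem_contingentCone_iff_infDist hw]
  constructor
  · intro H
    refine (Metric.nhds_basis_ball.prod (nhdsGT_basis 0)).frequently_iff.2 fun ⟨ε, η⟩ ⟨hε, hη⟩ => ?_
    obtain ⟨h, hlt, hpos, hhη⟩ := ((H ε hε).and_eventually (Ioo_mem_nhdsGT hη)).exists
    obtain ⟨a, ha, hdist⟩ := (Metric.infDist_lt_iff (closure_nonempty_iff.1 ⟨w, hw⟩)).1 hlt
    refine ⟨(h⁻¹ • (a - w), h), ⟨?_, hpos, hhη⟩, by simpa [smul_smul, hpos.ne'] using ha⟩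
    have hdiff : h⁻¹ • (a - w) - v = h⁻¹ • (a - (w + h • v)) := by
      rw [← sub_sub, smul_sub _ (a - w), inv_smul_smul₀ hpos.ne']
    rwa [Metric.mem_ball, dist_eq_norm, hdiff, norm_smul, norm_inv, Real.norm_of_nonneg hpos.le,
      inv_mul_lt_iff₀ hpos, ← dist_eq_norm, dist_comm, mul_comm]
  · intro H ε hε
    have hnear : ∀ᶠ p : E × ℝ in 𝓝 v ×ˢ 𝓝[>] 0, p.1 ∈ Metric.ball v ε ∧ 0 < p.2 :=
      Filter.prod_mem_prod (Metric.ball_mem_nhds v hε) self_mem_nhdsWithin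
    refine tendsto_snd.frequently ((H.and_eventually hnear).mono ?_)
    rintro ⟨u, h⟩ ⟨hA, hu, hpos⟩
    calc Metric.infDist (w + h • v) A ≤ dist (w + h • v) (w + h • u) :=
          Metric.infDist_le_dist_of_mem hA
      _ = dist u v * h := by
          rw [dist_add_left, dist_smul₀, Real.norm_of_nonneg hpos.le, dist_comm, mul_comm]
      _ < ε * h := by gcongr; exact hu

theorem contingentCone_mono (hAB : A ⊆ B) (hw : w ∈ closure A) :
    contingentCone A w ⊆ contingentCone B w := fun _ hv =>
  (mem_contingentCone_iff_frequently (closure_mono hAB hw)).2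
    (((mem_contingentCone_iff_frequently hw).1 hv).mono fun _ hp => hAB hp)

theorem mem_coneHull_preimage_add (v : E) {h : ℝ} (hh : 0 < h) (hv : w + h • v ∈ A) :
    v ∈ coneHull ((w + ·) ⁻¹' A) :=
  ⟨h⁻¹, by positivity, h • v, hv, (inv_smul_smul₀ hh.ne' v).symm⟩

theorem contingentCone_eq_closure_coneHull (hC : Convex ℝ C) (hw : w ∈ C) :
    contingentCone C w = closure (coneHull ((w + ·) ⁻¹' C)) := by
  ext v
  rw [mem_contingentCone_iff_frequently (subset_closure hw), mem_closure_iff_frequently]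
  constructor
  · intro H
    have hpos : ∀ᶠ p : E × ℝ in 𝓝 v ×ˢ 𝓝[>] 0, 0 < p.2 :=
      tendsto_snd.eventually self_mem_nhdsWithin
    exact tendsto_fst.frequently
      ((H.and_eventually hpos).mono fun p hp => mem_coneHull_preimage_add p.1 hp.2 hp.1)
  · refine fun H => Frequently.of_curry (H.mono ?_)
    rintro _ ⟨r, hr, a, ha, rfl⟩
    have hsmall : ∀ᶠ h : ℝ in 𝓝[>] 0, 0 < h ∧ h * r < 1 :=
      Filter.Eventually.and self_mem_nhdsWithin <| nhdsWithin_le_nhds <|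
        (continuous_mul_const r).continuousAt.eventually_lt_const (by simp)
    refine (hsmall.mono fun h ⟨hh, hhr⟩ => ?_).frequently
    rw [smul_smul]
    exact hC.add_smul_mem hw ha ⟨by positivity, hhr.le⟩

theorem exists_frequently_prod_nhds_of_isCompact {α β : Type*} [TopologicalSpace β] {l : Filter α}
    {S : Set β} (hS : IsCompact S) {P : α → β → Prop} (hP : ∃ᶠ x in l, ∃ k ∈ S, P x k) :
    ∃ k₀ ∈ S, ∃ᶠ q in l ×ˢ 𝓝 k₀, P q.1 q.2 := by
  by_contra! H
  have hfar : ∀ᶠ q in l ×ˢ 𝓝ˢ S, ¬ P q.1 q.2 := hS.mem_prod_nhdsSet_of_forall H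
  exact hP (hfar.curry.mono fun x hx ⟨k, hk, hxk⟩ => hx.self_of_nhdsSet k hk hxk)

theorem exists_frequently_exists_add_smul_sub_mem (hC : Convex ℝ C) (hAC : A ⊆ C) (hw : w ∈ A)
    (hdom : ∀ᶠ x in 𝓝 w, x ∈ C → x ∈ A + K) (hK : IsCone K)
    (hcpt : IsCompact (K ∩ Metric.sphere 0 1)) (hCK : contingentCone C w ∩ -K ⊆ {0})
    (hv : v ∈ contingentCone C w) :
    ∃ R, ∃ᶠ p : E × ℝ in 𝓝 v ×ˢ 𝓝[>] 0,
      ∃ k ∈ K ∩ Metric.closedBall 0 R, w + p.2 • (p.1 - k) ∈ A := by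
  have hT := contingentCone_eq_closure_coneHull hC (hAC hw)
  have hne : ((w + ·) ⁻¹' C).Nonempty := ⟨0, by simpa using hAC hw⟩
  obtain ⟨δ, hδ, hgap⟩ := exists_pos_forall_mul_norm_le_norm_add
    (isCone_closure (isCone_coneHull hne)) isClosed_closure hK hcpt (hT ▸ hCK)
  have hlim : Tendsto (fun p : E × ℝ => w + p.2 • p.1) (𝓝 v ×ˢ 𝓝[>] 0) (𝓝 w) := by
    have h0 : Tendsto (fun p : E × ℝ => p.2) (𝓝 v ×ˢ 𝓝[>] 0) (𝓝 0) :=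
      tendsto_nhdsWithin_iff.1 tendsto_snd |>.1
    simpa using tendsto_const_nhds.add (h0.smul tendsto_fst)
  have hnear : ∀ᶠ p : E × ℝ in 𝓝 v ×ˢ 𝓝[>] 0, p.1 ∈ Metric.ball 0 (‖v‖ + 1) ∧ 0 < p.2 :=
    Filter.prod_mem_prod (Metric.isOpen_ball.mem_nhds (by simp)) self_mem_nhdsWithin
  have hvC := (mem_contingentCone_iff_frequently (subset_closure (hAC hw))).1 hv
  refine ⟨(‖v‖ + 1) / δ,
    (hvC.and_eventually (hnear.and (hlim.eventually hdom))).mono ?_⟩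
  rintro ⟨u, h⟩ ⟨hu, ⟨hball, hh : 0 < h⟩, hadd⟩
  obtain ⟨a, ha, l, hl, hal : a + l = w + h • u⟩ := hadd hu
  have hk : h⁻¹ • l ∈ K := hK.2 h⁻¹ (by positivity) l hl
  have hA : w + h • (u - h⁻¹ • l) ∈ A := by
    rwa [smul_sub, smul_inv_smul₀ hh.ne', ← add_sub_assoc, ← hal, add_sub_cancel_right]
  have hbound := hgap _ (subset_closure (mem_coneHull_preimage_add _ hh (hAC hA))) _ hk
  rw [sub_add_cancel] at hbound
  refine ⟨h⁻¹ • l, ⟨hk, ?_⟩, hA⟩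
  rw [mem_closedBall_zero_iff, le_div_iff₀' hδ]
  exact hbound.trans (mem_ball_zero_iff.1 hball).le

theorem contingentCone_subset_add (hC : Convex ℝ C) (hAC : A ⊆ C) (hw : w ∈ A)
    (hdom : ∀ᶠ x in 𝓝 w, x ∈ C → x ∈ A + K) (hK : IsCone K)
    (hcpt : IsCompact (K ∩ Metric.sphere 0 1)) (hCK : contingentCone C w ∩ -K ⊆ {0}) :
    contingentCone C w ⊆ contingentCone A w + K := by
  intro v hv
  obtain ⟨R, hfreq⟩ :=
    exists_frequently_exists_add_smul_sub_mem hC hAC hw hdom hK hcpt hCK hv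
  obtain ⟨k, ⟨hk, -⟩, hkfreq⟩ :=
    exists_frequently_prod_nhds_of_isCompact (hK.isCompact_inter_closedBall hcpt _) hfreq
  have hshift : Tendsto (fun q : (E × ℝ) × E => (q.1.1 - q.2, q.1.2))
      ((𝓝 v ×ˢ 𝓝[>] 0) ×ˢ 𝓝 k) (𝓝 (v - k) ×ˢ 𝓝[>] 0) :=
    ((tendsto_fst.comp tendsto_fst).sub tendsto_snd).prodMk (tendsto_snd.comp tendsto_fst)
  exact ⟨v - k, (mem_contingentCone_iff_frequently (subset_closure hw)).2
    (hshift.frequently hkfreq), k, hk, sub_add_cancel v k⟩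

end ContingentCone

section MinSet

variable {E : Type*} [NormedAddCommGroup E] {K A D T : Set E} {a b : E}

theorem mem_singleton_sub_iff : b ∈ {a} - K ↔ a - b ∈ K := by
  rw [Set.singleton_sub]
  exact ⟨fun ⟨k, hk, hkb⟩ => by simpa [← hkb] using hk, fun h => ⟨a - b, h, sub_sub_cancel a b⟩⟩

theorem mem_minSet_iff (hK : IsPointed K) :
    a ∈ MinSet K A ↔ a ∈ A ∧ ∀ b ∈ A, a - b ∈ K → b = a := by
  refine and_congr_right fun _ => ⟨fun hmin b hb hab => ?_, ?_⟩
  · obtain ⟨_, rfl, k, hk, rfl⟩ := hmin ⟨hb, mem_singleton_sub_iff.2 hab⟩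
    simpa using hK.eq_zero hk (by simpa using hab)
  · rintro hmin b ⟨hb, hab⟩
    exact ⟨a, rfl, 0, hK.zero_mem, by simp [hmin b hb (mem_singleton_sub_iff.1 hab)]⟩

theorem minSet_eq_minSet_of_subset_add [NormedSpace ℝ E] (hK : IsCone K) (hKc : Convex ℝ K)
    (hKp : IsPointed K) (hDT : D ⊆ T) (hTD : T ⊆ D + K) : MinSet K D = MinSet K T := by
  ext a
  rw [mem_minSet_iff hKp, mem_minSet_iff hKp]
  constructor
  · rintro ⟨ha, hmin⟩
    refine ⟨hDT ha, fun b hb hab => ?_⟩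
    obtain ⟨d, hd, k, hk, rfl⟩ := hTD hb
    obtain rfl : d = a := hmin d hd (by simpa [sub_add_eq_sub_sub] using hK.add_mem hKc hab hk)
    simpa using hKp.eq_zero hk (by simpa using hab)
  · rintro ⟨ha, hmin⟩
    obtain ⟨d, hd, k, hk, hdk : d + k = a⟩ := hTD ha
    have hda : d = a := hmin d (hDT hd) (by simpa [← hdk] using hk)
    exact ⟨hda ▸ hd, fun b hb => hmin b (hDT hb)⟩

end MinSet

section ContingentDeriv

variable {H M : Z → Set Y} {K : Set Y} {z0 : Z} {y0 : Y}

theorem contingentDeriv_mono (hMH : ∀ z, M z ⊆ H z) (hy0 : y0 ∈ M z0) (z : Z) :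
    contingentDeriv M z0 y0 z ⊆ contingentDeriv H z0 y0 z := fun _ hy =>
  contingentCone_mono (A := graph M) (B := graph H) (w := (z0, y0)) (fun p => @hMH p.1 p.2)
    (subset_closure hy0) hy

theorem contingentDeriv_subset_add (hH : Convex ℝ (graph H)) (hMH : ∀ z, M z ⊆ H z)
    (hdom : ∀ᶠ z in 𝓝 z0, H z ⊆ M z + K) (hy0 : y0 ∈ M z0) (hK : IsCone K)
    (hcpt : IsCompact (K ∩ Metric.sphere 0 1)) (hHK : contingentDeriv H z0 y0 0 ∩ -K ⊆ {0})
    (z : Z) : contingentDeriv H z0 y0 z ⊆ contingentDeriv M z0 y0 z + K := by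
  have hL : IsCone (Prod.mk (0 : Z) '' K) := by
    refine ⟨hK.1.image _, ?_⟩
    rintro r hr _ ⟨k, hk, rfl⟩
    exact ⟨r • k, hK.2 r hr k hk, by simp⟩
  have hLcpt : IsCompact (Prod.mk (0 : Z) '' K ∩ Metric.sphere 0 1) := by
    have hsphere : Prod.mk (0 : Z) ⁻¹' Metric.sphere 0 1 = (Metric.sphere 0 1 : Set Y) := by
      ext k
      simp [Prod.norm_def]
    rw [← Set.image_inter_preimage, hsphere]
    exact hcpt.image (Continuous.prodMk_right 0)
  have hdomL : ∀ᶠ p in 𝓝 (z0, y0), p ∈ graph H → p ∈ graph M + Prod.mk (0 : Z) '' K := by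
    filter_upwards [(continuous_fst.tendsto (z0, y0)).eventually hdom] with p hp hpH
    obtain ⟨m, hm, k, hk, hmk⟩ := hp hpH
    exact ⟨(p.1, m), hm, (0, k), ⟨k, hk, rfl⟩, Prod.ext (add_zero _) hmk⟩
  have hHL : contingentCone (graph H) (z0, y0) ∩ -(Prod.mk (0 : Z) '' K) ⊆ {0} := by
    rintro ⟨u, v⟩ ⟨huv, k, hk, hkuv⟩
    obtain ⟨rfl, rfl⟩ : u = 0 ∧ k = -v := by simpa [eq_comm] using hkuv
    exact Prod.ext rfl (hHK ⟨huv, hk⟩)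
  intro y hy
  obtain ⟨⟨u, v⟩, huv, _, ⟨k, hk, rfl⟩, hsum⟩ := contingentCone_subset_add hH
    (fun p hp => hMH p.1 hp) hy0 hdomL hL hLcpt hHL hy
  obtain ⟨rfl, rfl⟩ : u = z ∧ v + k = y := by simpa using hsum
  exact ⟨v, huv, k, hk, rfl⟩

theorem minSet_contingentDeriv_eq (hH : Convex ℝ (graph H)) (hMH : ∀ z, M z ⊆ H z)
    (hdom : ∀ᶠ z in 𝓝 z0, H z ⊆ M z + K) (hy0 : y0 ∈ M z0) (hK : IsCone K) (hKc : Convex ℝ K)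
    (hKp : IsPointed K) (hcpt : IsCompact (K ∩ Metric.sphere 0 1))
    (hHK : contingentDeriv H z0 y0 0 ∩ -K ⊆ {0}) (z : Z) :
    MinSet K (contingentDeriv M z0 y0 z) = MinSet K (contingentDeriv H z0 y0 z) :=
  minSet_eq_minSet_of_subset_add hK hKc hKp (contingentDeriv_mono hMH hy0 z)
    (contingentDeriv_subset_add hH hMH hdom hy0 hK hcpt hHK z)

end ContingentDeriv

section HenigEfficiency

variable {E : Type*} [NormedAddCommGroup E] [NormedSpace ℝ E] {A K : Set E} {y : E}

/-- Proper efficiency of `y` in `A` in the sense of Henig: `A` lies weakly above `y` for a cone `Q`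
that dilates `K`. Only the intersection with `-interior Q` is restricted, and `0` is allowed in
it, so that all the efficiency notions of Henig type and, when `K ∖ {0}` is open, minimality itself
are instances. -/
def IsHenigEfficient (K A : Set E) (y : E) : Prop :=
  ∃ Q, IsCone Q ∧ K \ {0} ⊆ interior Q ∧ (A - {y}) ∩ -interior Q ⊆ {0}

theorem isHenigEfficient_of_isOpen (hK : IsCone K) (hKp : IsPointed K) (hopen : IsOpen (K \ {0}))
    (hy : y ∈ MinSet K A) : IsHenigEfficient K A y := by
  refine ⟨K, hK, interior_maximal Set.sdiff_subset hopen, ?_⟩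
  rw [Set.sub_singleton]
  rintro _ ⟨⟨a, ha, rfl⟩, hneg⟩
  have hay : a = y :=
    ((mem_minSet_iff hKp).1 hy).2 a ha (by simpa using interior_subset hneg)
  simp [hay]

theorem isHenigEfficient_of_dilated_base {Θ : Set E} {ε : ℝ} (hK : IsCone K)
    (hΘ : K = coneHull Θ) (hε : 0 < ε)
    (hA : closure (coneHull (A - {y})) ∩
      -closure (coneHull (Θ + ε • Metric.closedBall (0 : E) 1)) = {0}) :
    IsHenigEfficient K A y := by
  subst hΘ
  rw [smul_unitClosedBall_of_nonneg hε.le] at hA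
  obtain ⟨_, _, _, θ₀, hθ₀, -⟩ := hK.1
  have hQ : IsCone (coneHull (Θ + Metric.closedBall (0 : E) ε)) :=
    isCone_coneHull (Set.Nonempty.add ⟨θ₀, hθ₀⟩ ⟨0, by simpa using hε.le⟩)
  have hint : Θ + Metric.ball 0 ε ⊆ interior (coneHull (Θ + Metric.closedBall (0 : E) ε)) :=
    interior_maximal
      ((Set.add_subset_add_left Metric.ball_subset_closedBall).trans subset_coneHull)
      Metric.isOpen_ball.add_left
  refine ⟨_, hQ, ?_, ?_⟩
  · rintro _ ⟨⟨r, hr, θ, hθ, rfl⟩, hne⟩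
    have hr0 : r ≠ 0 := by rintro rfl; simp at hne
    exact hQ.smul_mem_interior (hr.lt_of_ne' hr0)
      (hint ⟨θ, hθ, 0, Metric.mem_ball_self hε, add_zero θ⟩)
  · rw [← hA]
    exact Set.inter_subset_inter (subset_coneHull.trans subset_closure)
      (Set.neg_subset_neg.2 (interior_subset.trans subset_closure))

theorem IsHenigEfficient.closure_coneHull_inter_neg_subset (h : IsHenigEfficient K A y)
    (hK : IsCone K) (hKc : Convex ℝ K) (hKp : IsPointed K)
    (hcpt : IsCompact (K ∩ Metric.sphere 0 1)) :
    closure (coneHull ((A - {y}) + K)) ∩ -K ⊆ {0} := by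
  obtain ⟨Q, hQ, hKQ, hAQ⟩ := h
  let T : Set E := {x | -x ∈ interior Q → x = 0}
  have hT : IsCone T := by
    refine ⟨⟨0, fun _ => rfl⟩, fun r hr x hx hrx => ?_⟩
    rcases hr.eq_or_lt with rfl | hr
    · exact zero_smul ℝ x
    · have hnx : -x ∈ interior Q := by
        simpa [smul_smul, hr.ne'] using hQ.smul_mem_interior (inv_pos.2 hr) hrx
      rw [hx hnx, smul_zero]
  have hTcl : IsClosed T := by
    have hcompl : Tᶜ = -interior Q ∩ {0}ᶜ := by ext x; simp [T]
    exact ⟨hcompl ▸ isOpen_interior.neg.inter isOpen_compl_singleton⟩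
  have hTK : T ∩ -K ⊆ {0} := by
    rintro x ⟨hxT, hxK⟩
    by_contra hx0
    exact hx0 (hxT (hKQ ⟨hxK, fun h => hx0 (neg_eq_zero.1 h)⟩))
  have hAT : A - {y} ⊆ T := fun x hx hnx => hAQ ⟨hx, hnx⟩
  have hsub : coneHull ((A - {y}) + K) ⊆ T + K :=
    coneHull_subset (hT.add hK) (Set.add_subset_add_right hAT)
  exact (Set.inter_subset_inter_left _ (closure_mono hsub)).trans
    (closure_add_inter_neg_subset hT hTcl hK hKc hKp hcpt hTK)

end HenigEfficiency

section Slice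

variable {C : Set (Z × Y)} {w c : Y}

theorem mem_coneHull_slice (hne : (Prod.mk (0 : Z) ⁻¹' C).Nonempty)
    (hw : ((0 : Z), w) ∈ coneHull C) : w ∈ coneHull (Prod.mk (0 : Z) ⁻¹' C) := by
  obtain ⟨r, hr, ⟨u, v⟩, huv, hrw⟩ := hw
  obtain ⟨hu, rfl⟩ : r • u = 0 ∧ w = r • v := by simpa [eq_comm] using hrw
  rcases smul_eq_zero.1 hu with rfl | rfl
  · rw [zero_smul]
    exact (isCone_coneHull hne).zero_mem
  · exact ⟨r, hr, v, huv, rfl⟩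

-- Adding `τ • (-τ⁻¹ • u, c)` moves a point `(u, v)` of the cone with small `u` into the slice.
theorem mem_closure_coneHull_slice (hC : Convex ℝ C) (hc : ∀ᶠ u in 𝓝 (0 : Z), (u, c) ∈ C)
    (hw : ((0 : Z), w) ∈ closure (coneHull C)) :
    w ∈ closure (coneHull (Prod.mk (0 : Z) ⁻¹' C)) := by
  have hshift : ∀ τ : ℝ, 0 < τ → w + τ • c ∈ closure (coneHull (Prod.mk (0 : Z) ⁻¹' C)) := by
    intro τ hτ
    have hsmall : ∀ᶠ p in 𝓝 ((0 : Z), w), (-(τ⁻¹ • p.1), c) ∈ C := by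
      have hlim : Tendsto (fun p : Z × Y => -(τ⁻¹ • p.1)) (𝓝 (0, w)) (𝓝 0) :=
        Continuous.tendsto' (by fun_prop) _ _ (by simp)
      exact hlim.eventually hc
    have hlim : Tendsto (fun p : Z × Y => p.2 + τ • c) (𝓝 (0, w)) (𝓝 (w + τ • c)) :=
      Continuous.tendsto (by fun_prop) ((0 : Z), w)
    refine mem_closure_iff_frequently.2 (hlim.frequently
      (((mem_closure_iff_frequently.1 hw).and_eventually hsmall).mono ?_))
    rintro ⟨u, v⟩ ⟨huv, hu⟩
    refine mem_coneHull_slice ⟨c, hc.self_of_nhds⟩ ?_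
    have hsum := add_mem_coneHull hC huv ⟨τ, hτ.le, _, hu, rfl⟩
    simpa [smul_smul, hτ.ne'] using hsum
  have hlim : Tendsto (fun τ : ℝ => w + τ • c) (𝓝[>] 0) (𝓝 w) :=
    (Continuous.tendsto' (by fun_prop) _ _ (by simp)).mono_left nhdsWithin_le_nhds
  exact isClosed_closure.mem_of_tendsto hlim (eventually_mem_nhdsWithin.mono hshift)

end Slice

section Program

variable {X Y Z : Type*} [NormedAddCommGroup Y] [NormedAddCommGroup Z]
  {Ω : Set X} {F : X → Set Y} {G : X → Set Z} {Zp : Set Z} {Yp : Set Y} {y0 : Y}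

theorem mem_graphVplus_iff {p : Z × Y} :
    p ∈ GraphVplus Ω F G Zp Yp ↔ ∃ x ∈ Ω, p.1 ∈ G x + Zp ∧ p.2 ∈ F x + Yp := by
  constructor
  · rintro ⟨y, hy, k, hk, hyk⟩
    obtain ⟨x, ⟨hx, g, hg, hgz⟩, hyx⟩ := Set.mem_iUnion₂.1 hy
    exact ⟨x, hx, ⟨g, hg, p.1 - g, mem_singleton_sub_iff.1 hgz, add_sub_cancel g p.1⟩,
      y, hyx, k, hk, hyk⟩
  · rintro ⟨x, hx, ⟨g, hg, ζ, hζ, hgζ : g + ζ = p.1⟩, y, hy, k, hk, hyk⟩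
    have hxS : x ∈ Smap Ω G Zp p.1 :=
      ⟨hx, g, hg, mem_singleton_sub_iff.2 (by simpa [← hgζ] using hζ)⟩
    exact ⟨y, Set.mem_biUnion hxS hy, k, hk, hyk⟩

variable [NormedSpace ℝ Y]

theorem mem_graphVplus_of_mem_vmap (hY : IsCone Yp) {z : Z} (hy0 : y0 ∈ Vmap Ω F G Zp z) :
    (z, y0) ∈ GraphVplus Ω F G Zp Yp :=
  ⟨y0, hy0, 0, hY.zero_mem, add_zero y0⟩

theorem Slater.eventually_mem_graphVplus (hSl : Slater Ω F G Zp) (hY : IsCone Yp) :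
    ∃ y, ∀ᶠ z in 𝓝 (0 : Z), (z, y) ∈ GraphVplus Ω F G Zp Yp := by
  obtain ⟨x, hx, ⟨y, hy⟩, g, hg, hgint⟩ := hSl
  refine ⟨y, ?_⟩
  have hlim : Tendsto (fun z => z - g) (𝓝 0) (𝓝 (-g)) :=
    Continuous.tendsto' (by fun_prop) _ _ (zero_sub g)
  filter_upwards [hlim.eventually (mem_interior_iff_mem_nhds.1 hgint)] with z hz
  exact mem_graphVplus_iff.2
    ⟨x, hx, ⟨g, hg, z - g, hz, add_sub_cancel g z⟩, y, hy, 0, hY.zero_mem, add_zero y⟩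

variable [NormedSpace ℝ Z]

theorem add_mem_graphVplus (hY : IsCone Yp) (hYc : Convex ℝ Yp) (hZ : IsCone Zp)
    (hZc : Convex ℝ Zp) {p : Z × Y} (hp : p ∈ GraphVplus Ω F G Zp Yp) {ζ : Z} (hζ : ζ ∈ Zp)
    {η : Y} (hη : η ∈ Yp) : p + (ζ, η) ∈ GraphVplus Ω F G Zp Yp := by
  obtain ⟨x, hx, ⟨g, hg, ζ', hζ', hgp⟩, y, hy, η', hη', hyp⟩ := mem_graphVplus_iff.1 hp
  exact mem_graphVplus_iff.2 ⟨x, hx,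
    ⟨g, hg, ζ' + ζ, hZ.add_mem hZc hζ' hζ, by rw [Prod.fst_add, ← hgp, add_assoc]⟩,
    y, hy, η' + η, hY.add_mem hYc hη' hη, by rw [Prod.snd_add, ← hyp, add_assoc]⟩

theorem mem_sdual_iff (hY : IsCone Yp) (hYc : Convex ℝ Yp) (hZ : IsCone Zp)
    (hZc : Convex ℝ Zp) (hy0 : y0 ∈ Vmap Ω F G Zp 0) {q : (Z →L[ℝ] ℝ) × (Y →L[ℝ] ℝ)} :
    q ∈ Sdual Ω F G Zp Yp y0 ↔
      ∀ p ∈ (((0 : Z), y0) + ·) ⁻¹' GraphVplus Ω F G Zp Yp, 0 ≤ q.1.coprod q.2 p := by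
  constructor
  · intro hq p hp
    have h := hq.2 _ hp
    simp only [Prod.fst_add, Prod.snd_add, zero_add, map_add] at h
    rw [ContinuousLinearMap.coprod_apply]
    linarith
  · intro H
    refine ⟨?_, fun p hp => ?_⟩
    · rintro z hz _ ⟨_, rfl, k, hk, rfl⟩
      have h := H (-z, k)
        (add_mem_graphVplus hY hYc hZ hZc (mem_graphVplus_of_mem_vmap hY hy0) hz hk)
      simp only [ContinuousLinearMap.coprod_apply, map_neg] at h
      simp only [map_sub]
      linarith
    · have h := H (p - (0, y0)) (by simpa using hp)
      simp only [map_sub, ContinuousLinearMap.coprod_apply, map_zero, zero_add] at h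
      linarith

theorem lagrange_neg_eq_contingentDeriv (hY : IsCone Yp) (hYc : Convex ℝ Yp) (hZ : IsCone Zp)
    (hZc : Convex ℝ Zp) (hconv : Convex ℝ (GraphVplus Ω F G Zp Yp))
    (hy0 : y0 ∈ Vmap Ω F G Zp 0) (z : Z) :
    Lagrange Ω F G Zp Yp y0 (-z) = contingentDeriv (VplusMap Ω F G Zp Yp) 0 y0 z := by
  have hmem := mem_graphVplus_of_mem_vmap hY hy0
  have hcone : contingentCone (graph (VplusMap Ω F G Zp Yp)) (0, y0) =
      closure (coneHull ((((0 : Z), y0) + ·) ⁻¹' GraphVplus Ω F G Zp Yp)) :=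
    contingentCone_eq_closure_coneHull hconv hmem
  have hne : ((((0 : Z), y0) + ·) ⁻¹' GraphVplus Ω F G Zp Yp).Nonempty :=
    ⟨0, by simpa using hmem⟩
  ext y
  change _ ↔ (z, y) ∈ contingentCone _ _
  rw [hcone, mem_closure_coneHull_iff (hconv.translate_preimage_right _) hne]
  constructor
  · intro hy f hf
    have h := hy (f.comp (.inl ℝ Z Y), f.comp (.inr ℝ Z Y))
      ((mem_sdual_iff hY hYc hZ hZc hy0).2 (by simpa using hf))
    rw [← f.coprod_comp_inl_inr, ContinuousLinearMap.coprod_apply]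
    rw [map_neg] at h
    linarith
  · intro H q hq
    have h := H _ ((mem_sdual_iff hY hYc hZ hZc hy0).1 hq)
    rw [ContinuousLinearMap.coprod_apply] at h
    rw [map_neg]
    linarith

theorem lagrange_zero_inter_neg_subset_of_base (hZ : IsCone Zp) {Θ : Set (Z × Y)}
    (hΘ : Convex ℝ Θ) (h0 : (0 : Z × Y) ∉ Θ) (hbase : GraphLagrange Ω F G Zp Yp y0 = coneHull Θ) :
    Lagrange Ω F G Zp Yp y0 0 ∩ -Yp ⊆ {0} := by
  rintro y ⟨hy, hyneg⟩
  have hneg : ((0 : Z), -y) ∈ GraphLagrange Ω F G Zp Yp y0 := by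
    intro q hq
    have h := hq.1 0 (by simpa using hZ.zero_mem) (y0 + y)
      (mem_singleton_sub_iff.2 (by simpa using hyneg))
    simp only [map_zero, map_add, map_neg] at h ⊢
    linarith
  have hpair : ((0 : Z), y) ∈ coneHull Θ ∩ -coneHull Θ := by
    rw [← hbase]
    exact ⟨hy, by simpa using hneg⟩
  exact congrArg Prod.snd (coneHull_inter_neg_subset hΘ h0 hpair)

theorem lagrange_zero_inter_neg_subset_of_isHenigEfficient (hY : IsCone Yp)
    (hYc : Convex ℝ Yp) (hYp : IsPointed Yp) (hcpt : IsCompact (Yp ∩ Metric.sphere 0 1))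
    (hZ : IsCone Zp) (hZc : Convex ℝ Zp) (hconv : Convex ℝ (GraphVplus Ω F G Zp Yp))
    (hSl : Slater Ω F G Zp) (hy0 : y0 ∈ Vmap Ω F G Zp 0)
    (hHenig : IsHenigEfficient Yp (Vmap Ω F G Zp 0) y0) :
    Lagrange Ω F G Zp Yp y0 0 ∩ -Yp ⊆ {0} := by
  rintro w ⟨hw, hneg⟩
  rw [← neg_zero, lagrange_neg_eq_contingentDeriv hY hYc hZ hZc hconv hy0] at hw
  change ((0 : Z), w) ∈ contingentCone (GraphVplus Ω F G Zp Yp) (0, y0) at hw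
  rw [contingentCone_eq_closure_coneHull hconv (mem_graphVplus_of_mem_vmap hY hy0)] at hw
  obtain ⟨y, hy⟩ := hSl.eventually_mem_graphVplus hY
  have hslice := mem_closure_coneHull_slice (c := y - y0) (hconv.translate_preimage_right _)
    (by simpa using hy) hw
  refine hHenig.closure_coneHull_inter_neg_subset hY hYc hYp hcpt ⟨?_, hneg⟩
  rw [sub_add_eq_add_sub, Set.sub_singleton]
  convert hslice using 3
  ext v
  simp [GraphVplus, sub_eq_iff_eq_add, add_comm y0]

variable [NormedAddCommGroup X] [NormedSpace ℝ X]

theorem convex_graphVplus (hF : Convex ℝ {p : X × Y | p.1 ∈ Ω ∧ p.2 ∈ F p.1 + Yp})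
    (hG : Convex ℝ {p : X × Z | p.1 ∈ Ω ∧ p.2 ∈ G p.1 + Zp}) :
    Convex ℝ (GraphVplus Ω F G Zp Yp) := by
  intro p hp q hq a b ha hb hab
  obtain ⟨x, hx, hpG, hpF⟩ := mem_graphVplus_iff.1 hp
  obtain ⟨u, hu, hqG, hqF⟩ := mem_graphVplus_iff.1 hq
  have hGxu := hG (x := (x, p.1)) ⟨hx, hpG⟩ (y := (u, q.1)) ⟨hu, hqG⟩ ha hb hab
  have hFxu := hF (x := (x, p.2)) ⟨hx, hpF⟩ (y := (u, q.2)) ⟨hu, hqF⟩ ha hb hab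
  exact mem_graphVplus_iff.2 ⟨a • x + b • u, hGxu.1, hGxu.2, hFxu.2⟩

theorem stmt_18_general (hY : IsCone Yp) (hYc : Convex ℝ Yp) (hYp : IsPointed Yp)
    (hZ : IsCone Zp) (hZc : Convex ℝ Zp)
    (hF : Convex ℝ {p : X × Y | p.1 ∈ Ω ∧ p.2 ∈ F p.1 + Yp})
    (hG : Convex ℝ {p : X × Z | p.1 ∈ Ω ∧ p.2 ∈ G p.1 + Zp})
    (hy0 : MinimalPoint Ω F G Zp Yp y0) (hcpt : IsCompact (Yp ∩ Metric.sphere (0 : Y) 1))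
    (hdom : ∃ V0 ∈ 𝓝 (0 : Z), ∀ z ∈ V0, Vmap Ω F G Zp z ⊆ Mmap Ω F G Zp Yp z + Yp)
    (hL : Lagrange Ω F G Zp Yp y0 0 ∩ -Yp ⊆ {0}) (z : Z) :
    MinSet Yp (contingentDeriv (Mmap Ω F G Zp Yp) 0 y0 z) =
      MinSet Yp (Lagrange Ω F G Zp Yp y0 (-z)) := by
  have hconv : Convex ℝ (GraphVplus Ω F G Zp Yp) := convex_graphVplus hF hG
  have hMV : ∀ z, Mmap Ω F G Zp Yp z ⊆ VplusMap Ω F G Zp Yp z :=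
    fun z y hy => mem_graphVplus_of_mem_vmap hY hy.1
  have hdomV : ∀ᶠ z in 𝓝 (0 : Z), VplusMap Ω F G Zp Yp z ⊆ Mmap Ω F G Zp Yp z + Yp := by
    filter_upwards [eventually_iff_exists_mem.2 hdom] with z hz
    calc Vmap Ω F G Zp z + Yp ⊆ Mmap Ω F G Zp Yp z + Yp + Yp := Set.add_subset_add_right hz
      _ = Mmap Ω F G Zp Yp z + (Yp + Yp) := add_assoc _ _ _
      _ ⊆ Mmap Ω F G Zp Yp z + Yp := Set.add_subset_add_left <|
        Set.add_subset_iff.2 fun _ ha _ hb => hY.add_mem hYc ha hb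
  have hLV := lagrange_neg_eq_contingentDeriv hY hYc hZ hZc hconv hy0.1
  rw [hLV z]
  refine minSet_contingentDeriv_eq (H := VplusMap Ω F G Zp Yp) hconv hMV hdomV hy0 hY hYc hYp
    hcpt ?_ z
  rwa [← hLV 0, neg_zero]

end Program

theorem stmt_18 (Ω : Set X) (F : X → Set Y) (G : X → Set Z) (Zp : Set Z) (Yp : Set Y)
    (hSt : StandingHyp Ω F G Zp Yp)
    (hYpPointed : IsPointed Yp)
    (y0 : Y) (hy0 : MinimalPoint Ω F G Zp Yp y0)
    (x0 : X) (hx0Ω : x0 ∈ Ω) (hx0feas : (G x0 ∩ (-Zp)).Nonempty) (hy0F : y0 ∈ F x0)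
    (hSl : Slater Ω F G Zp)
    (hcpt : IsCompact (Yp ∩ Metric.sphere (0:Y) 1))
    (hdom : ∃ V0 ∈ 𝓝 (0:Z), ∀ z ∈ V0, Vmap Ω F G Zp z ⊆ Mmap Ω F G Zp Yp z + Yp)
    (hcases :
      -- (a) Graph(L_{y₀}) has a bounded base
      (∃ Θ : Set (Z × Y), Convex ℝ Θ ∧ (0 : Z × Y) ∉ closure Θ ∧
          GraphLagrange Ω F G Zp Yp y0 = coneHull Θ ∧ Bornology.IsBounded Θ) ∨
      -- (b) Y₊ ∖ {0} is open
      IsOpen (Yp \ {0}) ∨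
      -- (c) y₀ is a Henig global properly efficient point of V(0)
      (∃ K : Set Y, IsCone K ∧ IsPointed K ∧ Yp \ {0} ⊆ interior K ∧
          (Vmap Ω F G Zp 0 - {y0}) ∩ (-interior K) = ∅) ∨
      -- (d) y₀ is a Henig properly efficient point of V(0)
      (∃ Θ : Set Y, Convex ℝ Θ ∧ (0:Y) ∉ closure Θ ∧ Yp = coneHull Θ ∧
          ∃ ε : ℝ, 0 < ε ∧
            closure (coneHull (Vmap Ω F G Zp 0 - {y0})) ∩
              (-closure (coneHull (Θ + ε • Metric.closedBall (0:Y) 1))) = {0})) :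
    ∀ z : Z, MinSet Yp (contingentDeriv (Mmap Ω F G Zp Yp) 0 y0 z) =
      MinSet Yp (Lagrange Ω F G Zp Yp y0 (-z)) := by
  obtain ⟨hY, -, -, hYc, hZ, -, -, hZc, -, -, hF, hG⟩ := hSt
  have hHenig (h : IsHenigEfficient Yp (Vmap Ω F G Zp 0) y0) :=
    lagrange_zero_inter_neg_subset_of_isHenigEfficient hY hYc hYpPointed hcpt hZ hZc
      (convex_graphVplus hF hG) hSl hy0.1 h
  refine stmt_18_general hY hYc hYpPointed hZ hZc hF hG hy0 hcpt hdom ?_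
  rcases hcases with ⟨Θ, hΘ, h0, hbase, -⟩ | hopen | ⟨K, hK, -, hYK, hVK⟩ |
    ⟨Θ, -, -, hΘ, ε, hε, hVΘ⟩
  · exact lagrange_zero_inter_neg_subset_of_base hZ hΘ (fun h => h0 (subset_closure h)) hbase
  · exact hHenig (isHenigEfficient_of_isOpen hY hYpPointed hopen hy0)
  · exact hHenig ⟨K, hK, hYK, hVK.trans_subset (Set.empty_subset _)⟩
  · exact hHenig (isHenigEfficient_of_dilated_base hY hΘ hε hVΘ)

end Paper
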